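/- Under Jacod's density hypothesis and the noisy-barrier setup, for every t ≥ 0 one has, P-almost surely, E_P[1_{τ > t} | F^I_t] = S^I_t(L_t), where S^I_t(x) := ( ∫_ℝ 1_{X*_t > l} p_t(l) q_t(x − l) P^L(dl) ) / ( ∫_ℝ p_t(l) q_t(x − l) P^L(dl) ), and the denominator evaluated at x = L_t is P-a.s. strictly positive. (Consequence of Proposition 5.1: the explicit form of the insider's Azéma supermartingale S^I_t = E_P[1_{τ>t} | F^I_t].) -/

import Mathlib

open MeasureTheory ProbabilityTheory Set
open scoped NNReal Classical

noncomputable section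

/-- Running infimum `X*_t = inf_{s ≤ t} X_s` of the process `X` over the time interval
`[0, t]`. -/
def runInf {Ω : Type*} (X : ℝ≥0 → Ω → ℝ) (t : ℝ≥0) (ω : Ω) : ℝ :=
  ⨅ s : Set.Icc (0 : ℝ≥0) t, X s.1 ω

/-- The insider's default-free σ-algebra `F^I_t = F_t ∨ σ(L_s = L + ε_s : s ≤ t)`. -/
def insiderSigma {Ω : Type*} [m0 : MeasurableSpace Ω] (F : Filtration ℝ≥0 m0)
    (L : Ω → ℝ) (ε : ℝ≥0 → Ω → ℝ) (t : ℝ≥0) : MeasurableSpace Ω :=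
  F t ⊔ ⨆ s ∈ Set.Iic t, MeasurableSpace.comap (fun ω => L ω + ε s ω) inferInstance


open scoped ENNReal

theorem core_lintegral {Ω E K : Type*} [MeasurableSpace Ω] [MeasurableSpace E] [MeasurableSpace K]
    (P : Measure Ω) [IsProbabilityMeasure P] (Y : Ω → E) (hY : Measurable Y)
    (L e : Ω → ℝ) (hL : Measurable L) (he : Measurable e) (U : Ω → K) (hU : Measurable U)
    (p : E × ℝ → ℝ≥0∞) (hp : Measurable p) (q : ℝ → ℝ≥0∞) (hq : Measurable q)
    (h1 : P.map (fun ω => (Y ω, L ω)) = ((P.map Y).prod (P.map L)).withDensity p)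
    (h2 : P.map e = volume.withDensity q)
    (hi : IndepFun (fun ω => (U ω, e ω)) (fun ω => (Y ω, L ω)) P) (hi' : IndepFun U e P)
    (g : E → ℝ → ℝ → K → ℝ≥0∞)
    (hg : Measurable fun z : ((E × ℝ) × ℝ) × K => g z.1.1.1 z.1.1.2 z.1.2 z.2) :
    ∫⁻ ω, g (Y ω) (L ω) (L ω + e ω) (U ω) ∂P =
      ∫⁻ y, ∫⁻ x, ∫⁻ u, ∫⁻ l, p (y, l) * q (x - l) * g y l x u ∂(P.map L) ∂(P.map U)
        ∂(volume : Measure ℝ) ∂(P.map Y) := by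
  have : IsProbabilityMeasure (P.map Y) := Measure.isProbabilityMeasure_map hY.aemeasurable
  have : IsProbabilityMeasure (P.map L) := Measure.isProbabilityMeasure_map hL.aemeasurable
  have : IsProbabilityMeasure (P.map U) := Measure.isProbabilityMeasure_map hU.aemeasurable
  have : IsProbabilityMeasure (P.map e) := Measure.isProbabilityMeasure_map he.aemeasurable
  have : IsProbabilityMeasure (P.map (fun ω => (Y ω, L ω))) :=
    Measure.isProbabilityMeasure_map (hY.prodMk hL).aemeasurable
  have hmap : P.map (fun ω => ((U ω, e ω), (Y ω, L ω))) =
      ((P.map U).prod (P.map e)).prod (P.map (fun ω => (Y ω, L ω))) := by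
    rw [(indepFun_iff_map_prod_eq_prod_map_map (hU.prodMk he).aemeasurable
      (hY.prodMk hL).aemeasurable).1 hi,
      (indepFun_iff_map_prod_eq_prod_map_map hU.aemeasurable he.aemeasurable).1 hi']
  have hg' : Measurable fun z : (K × ℝ) × (E × ℝ) => g z.2.1 z.2.2 (z.2.2 + z.1.2) z.1.1 :=
    hg.comp (f := fun z : (K × ℝ) × (E × ℝ) => ((z.2, z.2.2 + z.1.2), z.1.1)) (by fun_prop)
  calc ∫⁻ ω, g (Y ω) (L ω) (L ω + e ω) (U ω) ∂P
      = ∫⁻ z, g z.2.1 z.2.2 (z.2.2 + z.1.2) z.1.1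
          ∂(P.map (fun ω => ((U ω, e ω), (Y ω, L ω)))) := by
        rw [lintegral_map hg' ((hU.prodMk he).prodMk (hY.prodMk hL))]
    _ = ∫⁻ v : E × ℝ, ∫⁻ u, ∫⁻ w, g v.1 v.2 (v.2 + w) u ∂(P.map e) ∂(P.map U)
          ∂(P.map (fun ω => (Y ω, L ω))) := by
        rw [hmap, lintegral_prod_symm' _ hg']
        refine lintegral_congr fun v => ?_
        exact lintegral_prod _ (hg'.comp (g := fun z : (K × ℝ) × (E × ℝ) => g z.2.1 z.2.2 (z.2.2 + z.1.2) z.1.1)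
          (measurable_id.prodMk measurable_const)).aemeasurable
    _ = ∫⁻ v : E × ℝ, ∫⁻ x, ∫⁻ u, q (x - v.2) * g v.1 v.2 x u ∂(P.map U) ∂(volume : Measure ℝ)
          ∂(P.map (fun ω => (Y ω, L ω))) := by
        refine lintegral_congr fun v => ?_
        have m1 : Measurable fun z : ℝ × K => q (z.1 - v.2) * g v.1 v.2 z.1 z.2 := by
          refine (hq.comp (by fun_prop)).mul ?_
          exact hg.comp (f := fun z : ℝ × K => ((v, z.1), z.2)) (by fun_prop)
        rw [lintegral_lintegral_swap (μ := (volume : Measure ℝ)) (ν := P.map U)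
          (f := fun x u => q (x - v.2) * g v.1 v.2 x u) m1.aemeasurable]
        refine lintegral_congr fun u => ?_
        rw [h2]
        refine (lintegral_withDensity_eq_lintegral_mul _ hq
          (hg.comp (f := fun z : ℝ => ((v, v.2 + z), u)) (by fun_prop))).trans ?_
        rw [← lintegral_add_left_eq_self (fun x => q (x - v.2) * g v.1 v.2 x u) v.2]
        refine lintegral_congr fun x => ?_
        simp
    _ = ∫⁻ y, ∫⁻ l, ∫⁻ x, ∫⁻ u, p (y, l) * (q (x - l) * g y l x u) ∂(P.map U)
          ∂(volume : Measure ℝ) ∂(P.map L) ∂(P.map Y) := by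
        have m1 : Measurable fun z : ((E × ℝ) × ℝ) × K =>
            q (z.1.2 - z.1.1.2) * g z.1.1.1 z.1.1.2 z.1.2 z.2 := by
          exact (hq.comp (by fun_prop)).mul hg
        have m2 := (m1.lintegral_prod_right' (ν := P.map U))
        have m3 := (m2.lintegral_prod_right' (ν := (volume : Measure ℝ)))
        rw [h1, lintegral_withDensity_eq_lintegral_mul _ hp m3,
          lintegral_prod _ (hp.mul m3).aemeasurable]
        refine lintegral_congr fun y => lintegral_congr fun l => ?_
        simp only [Pi.mul_apply]
        refine (lintegral_const_mul _ (m2.comp (f := fun x : ℝ => ((y, l), x)) (by fun_prop))).symm.trans ?_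
        refine lintegral_congr fun x => ?_
        exact (lintegral_const_mul _ (m1.comp (f := fun u : K => (((y, l), x), u)) (by fun_prop))).symm
    _ = _ := by
        refine lintegral_congr fun y => ?_
        have m1 : Measurable fun z : (ℝ × ℝ) × K =>
            p (y, z.1.1) * (q (z.1.2 - z.1.1) * g y z.1.1 z.1.2 z.2) := by
          refine (hp.comp (by fun_prop)).mul ((hq.comp (by fun_prop)).mul ?_)
          exact hg.comp (f := fun z : (ℝ × ℝ) × K => (((y, z.1.1), z.1.2), z.2)) (by fun_prop)
        rw [lintegral_lintegral_swap (m1.lintegral_prod_right').aemeasurable]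
        refine lintegral_congr fun x => ?_
        rw [lintegral_lintegral_swap]
        · simp only [mul_assoc]
        · exact (m1.comp (f := fun z : ℝ × K => ((z.1, x), z.2)) (by fun_prop)).aemeasurable

theorem core {Ω E K : Type*} [MeasurableSpace Ω] [MeasurableSpace E] [MeasurableSpace K]
    (P : Measure Ω) [IsProbabilityMeasure P] (Y : Ω → E) (hY : Measurable Y)
    (L e : Ω → ℝ) (hL : Measurable L) (he : Measurable e) (U : Ω → K) (hU : Measurable U)
    (p : E × ℝ → ℝ≥0∞) (hp : Measurable p) (q : ℝ → ℝ≥0∞) (hq : Measurable q)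
    (h1 : P.map (fun ω => (Y ω, L ω)) = ((P.map Y).prod (P.map L)).withDensity p)
    (h2 : P.map e = volume.withDensity q)
    (hi : IndepFun (fun ω => (U ω, e ω)) (fun ω => (Y ω, L ω)) P) (hi' : IndepFun U e P)
    (r : E → ℝ) (hr : Measurable r) :
    (∀ᵐ ω ∂P, ∫⁻ l, p (Y ω, l) * q (L ω + e ω - l) ∂(P.map L) ≠ 0) ∧
    (∀ᵐ ω ∂P, ∫⁻ l, p (Y ω, l) * q (L ω + e ω - l) ∂(P.map L) ≠ ∞) ∧
    (P[fun ω => if L ω < r (Y ω) then (1 : ℝ) else 0|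
      MeasurableSpace.comap (fun ω => ((Y ω, L ω + e ω), U ω)) inferInstance]) =ᵐ[P] fun ω =>
      ((∫⁻ l, p (Y ω, l) * q (L ω + e ω - l) * (if l < r (Y ω) then 1 else 0) ∂(P.map L)) /
      ∫⁻ l, p (Y ω, l) * q (L ω + e ω - l) ∂(P.map L)).toReal := by
  have : IsProbabilityMeasure (P.map Y) := Measure.isProbabilityMeasure_map hY.aemeasurable
  have : IsProbabilityMeasure (P.map L) := Measure.isProbabilityMeasure_map hL.aemeasurable
  have : IsProbabilityMeasure (P.map U) := Measure.isProbabilityMeasure_map hU.aemeasurable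
  have key := core_lintegral P Y hY L e hL he U hU p hp q hq h1 h2 hi hi'
  have mind : Measurable fun z : E × ℝ => if z.2 < r z.1 then (1 : ℝ≥0∞) else 0 :=
    Measurable.ite (measurableSet_lt measurable_snd (hr.comp measurable_fst))
      measurable_const measurable_const
  have mk : Measurable fun z : (E × ℝ) × ℝ => p (z.1.1, z.2) * q (z.1.2 - z.2) :=
    (hp.comp (by fun_prop)).mul (hq.comp (by fun_prop))
  have mk' : Measurable fun z : (E × ℝ) × ℝ => p (z.1.1, z.2) * q (z.1.2 - z.2) *
      (if z.2 < r z.1.1 then 1 else 0) :=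
    mk.mul (mind.comp (f := fun z : (E × ℝ) × ℝ => (z.1.1, z.2)) (by fun_prop))
  set D : E × ℝ → ℝ≥0∞ := fun z => ∫⁻ l, p (z.1, l) * q (z.2 - l) ∂(P.map L) with hD
  set N : E × ℝ → ℝ≥0∞ := fun z => ∫⁻ l, p (z.1, l) * q (z.2 - l) *
      (if l < r z.1 then 1 else 0) ∂(P.map L) with hN
  have mD : Measurable D := mk.lintegral_prod_right'
  have mN : Measurable N := mk'.lintegral_prod_right'
  have hND : ∀ z, N z ≤ D z := fun z => lintegral_mono fun l => by
    dsimp only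
    split_ifs <;> simp
  -- integrating functions of the observation
  have keyG : ∀ G : (E × ℝ) × K → ℝ≥0∞, Measurable G →
      ∫⁻ ω, G ((Y ω, L ω + e ω), U ω) ∂P =
        ∫⁻ y, ∫⁻ x, ∫⁻ u, D (y, x) * G ((y, x), u) ∂(P.map U) ∂(volume : Measure ℝ)
          ∂(P.map Y) := by
    intro G hG
    rw [key (fun y l x u => G ((y, x), u)) (hG.comp (by fun_prop))]
    refine lintegral_congr fun y => lintegral_congr fun x => lintegral_congr fun u => ?_
    exact lintegral_mul_const _ (mk.comp (f := fun l : ℝ => ((y, x), l)) (by fun_prop))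
  have keyN : ∀ G : (E × ℝ) × K → ℝ≥0∞, Measurable G →
      ∫⁻ ω, (if L ω < r (Y ω) then 1 else 0) * G ((Y ω, L ω + e ω), U ω) ∂P =
        ∫⁻ y, ∫⁻ x, ∫⁻ u, N (y, x) * G ((y, x), u) ∂(P.map U) ∂(volume : Measure ℝ)
          ∂(P.map Y) := by
    intro G hG
    rw [key (fun y l x u => (if l < r y then 1 else 0) * G ((y, x), u))
      ((mind.comp (f := fun z : ((E × ℝ) × ℝ) × K => z.1.1) (by fun_prop)).mul
        (hG.comp (by fun_prop)))]
    refine lintegral_congr fun y => lintegral_congr fun x => lintegral_congr fun u => ?_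
    simp only [← mul_assoc]
    exact lintegral_mul_const _ (mk'.comp (f := fun l : ℝ => ((y, x), l)) (by fun_prop))
  have hone : ∫⁻ y, ∫⁻ x, D (y, x) ∂(volume : Measure ℝ) ∂(P.map Y) = 1 := by
    have := keyG (fun _ => 1) measurable_const
    simpa using this.symm
  have hDfin : ∀ᵐ y ∂(P.map Y), ∀ᵐ x ∂(volume : Measure ℝ), D (y, x) < ∞ := by
    have m : Measurable fun y => ∫⁻ x, D (y, x) ∂(volume : Measure ℝ) := mD.lintegral_prod_right'
    filter_upwards [ae_lt_top m (by rw [hone]; simp)] with y hy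
    exact ae_lt_top (mD.comp (measurable_const.prodMk measurable_id)) hy.ne
  have mobs : Measurable (fun ω => ((Y ω, L ω + e ω), U ω)) := by fun_prop
  have h0 : ∀ᵐ ω ∂P, D (Y ω, L ω + e ω) ≠ 0 := by
    have mG : Measurable fun z : (E × ℝ) × K => if D z.1 = 0 then (1 : ℝ≥0∞) else 0 :=
      Measurable.ite ((mD.comp measurable_fst) (measurableSet_singleton 0))
        measurable_const measurable_const
    have := keyG _ mG
    have hz : ∀ z, D z * (if D z = 0 then (1 : ℝ≥0∞) else 0) = 0 := by
      intro z; split_ifs with h <;> simp [h]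
    simp only [hz, lintegral_zero] at this
    filter_upwards [(lintegral_eq_zero_iff (mG.comp mobs)).1 this] with ω hω h
    simp [h] at hω
  have htop : ∀ᵐ ω ∂P, D (Y ω, L ω + e ω) ≠ ∞ := by
    have mG : Measurable fun z : (E × ℝ) × K => if D z.1 = ∞ then (1 : ℝ≥0∞) else 0 :=
      Measurable.ite ((mD.comp measurable_fst) (measurableSet_singleton ∞))
        measurable_const measurable_const
    have := keyG _ mG
    have hz : ∫⁻ y, ∫⁻ x, ∫⁻ u, D (y, x) * (if D (y, x) = ∞ then (1 : ℝ≥0∞) else 0) ∂(P.map U)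
        ∂(volume : Measure ℝ) ∂(P.map Y) = 0 := by
      rw [← lintegral_zero (μ := P.map Y)]
      refine lintegral_congr_ae ?_
      filter_upwards [hDfin] with y hy
      rw [← lintegral_zero (μ := (volume : Measure ℝ))]
      refine lintegral_congr_ae ?_
      filter_upwards [hy] with x hx
      simp [hx.ne]
    rw [hz] at this
    filter_upwards [(lintegral_eq_zero_iff (mG.comp mobs)).1 this] with ω hω h
    simp [h] at hω
  refine ⟨h0, htop, ?_⟩
  have hm : MeasurableSpace.comap (fun ω => ((Y ω, L ω + e ω), U ω)) inferInstance ≤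
      (inferInstance : MeasurableSpace Ω) := mobs.comap_le
  have mQ : Measurable fun z : (E × ℝ) × K => N z.1 / D z.1 :=
    (mN.comp measurable_fst).div (mD.comp measurable_fst)
  have hle1 : ∀ z, N z / D z ≤ 1 := fun z => ENNReal.div_le_of_le_mul (by simpa using hND z)
  have mobs' : Measurable fun ω => (N (Y ω, L ω + e ω) / D (Y ω, L ω + e ω)) := mQ.comp mobs
  have msetL : MeasurableSet {ω | L ω < r (Y ω)} := measurableSet_lt hL (hr.comp hY)
  have mf : Measurable fun ω => if L ω < r (Y ω) then (1 : ℝ) else 0 :=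
    Measurable.ite msetL measurable_const measurable_const
  symm
  refine ae_eq_condExp_of_forall_setIntegral_eq hm ?_ ?_ ?_ ?_
  · refine Integrable.of_bound mf.aestronglyMeasurable 1 (ae_of_all _ fun ω => ?_)
    split_ifs <;> simp
  · intro s hs _
    refine (Integrable.of_bound mobs'.ennreal_toReal.aestronglyMeasurable 1
      (ae_of_all _ fun ω => ?_)).integrableOn
    rw [Real.norm_of_nonneg ENNReal.toReal_nonneg]
    exact ENNReal.toReal_le_of_le_ofReal (by simp) (by simpa using hle1 _)
  · rintro s ⟨T, hT, rfl⟩ _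
    have hs : MeasurableSet ((fun ω => ((Y ω, L ω + e ω), U ω)) ⁻¹' T) := mobs hT
    have e1 : ∫⁻ ω in (fun ω => ((Y ω, L ω + e ω), U ω)) ⁻¹' T,
        (N (Y ω, L ω + e ω) / D (Y ω, L ω + e ω)) ∂P =
        ∫⁻ ω in (fun ω => ((Y ω, L ω + e ω), U ω)) ⁻¹' T,
          (if L ω < r (Y ω) then 1 else 0) ∂P := by
      have mT : Measurable (T.indicator (fun _ => (1 : ℝ≥0∞))) := measurable_const.indicator hT
      have a1 := keyG _ (mQ.mul mT)
      have a2 := keyN _ mT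
      have a3 : ∫⁻ y, ∫⁻ x, ∫⁻ u, D (y, x) * ((fun z : (E × ℝ) × K => N z.1 / D z.1) * (T.indicator (fun _ => (1 : ℝ≥0∞)))) ((y, x), u) ∂(P.map U) ∂(volume : Measure ℝ)
          ∂(P.map Y) = ∫⁻ y, ∫⁻ x, ∫⁻ u, N (y, x) * (T.indicator (fun _ => (1 : ℝ≥0∞))) ((y, x), u) ∂(P.map U) ∂(volume : Measure ℝ)
          ∂(P.map Y) := by
        refine lintegral_congr_ae ?_
        filter_upwards [hDfin] with y hy
        refine lintegral_congr_ae ?_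
        filter_upwards [hy] with x hx
        refine lintegral_congr fun u => ?_
        simp only [Pi.mul_apply]
        rw [← mul_assoc]
        congr 1
        by_cases hD0 : D (y, x) = 0
        · have := hND (y, x)
          rw [hD0] at this ⊢
          simp [le_antisymm this bot_le]
        · exact ENNReal.mul_div_cancel hD0 hx.ne
      rw [a3, ← a2] at a1
      rw [← lintegral_indicator hs, ← lintegral_indicator hs]
      convert a1 using 2
      · ext ω
        simp [Set.indicator]
      · ext ω
        simp [Set.indicator]
    rw [integral_toReal mobs'.aemeasurable.restrict
      (ae_of_all _ fun ω => (hle1 _).trans_lt ENNReal.one_lt_top), e1,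
      ← integral_toReal]
    · refine integral_congr_ae (ae_of_all _ fun ω => ?_)
      dsimp only
      split_ifs <;> simp
    · exact (Measurable.ite msetL measurable_const measurable_const).aemeasurable
    · exact ae_of_all _ fun ω => by split_ifs <;> simp
  · have : Measurable[MeasurableSpace.comap (fun ω => ((Y ω, L ω + e ω), U ω)) inferInstance]
        (fun ω => (N (Y ω, L ω + e ω) / D (Y ω, L ω + e ω)).toReal) :=
      mQ.ennreal_toReal.comp (comap_measurable (fun ω => ((Y ω, L ω + e ω), U ω)))
    exact this.aestronglyMeasurable

theorem joint_law {Ω E : Type*} [m0 : MeasurableSpace Ω] [mE : MeasurableSpace E]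
    (P : Measure Ω) [IsProbabilityMeasure P] (Y : Ω → E) (hY : Measurable Y)
    (L : Ω → ℝ) (hL : Measurable L)
    (p : E × ℝ → ℝ) (hp : Measurable p) (hp0 : ∀ z, 0 ≤ p z)
    (h : ∀ f : ℝ → ℝ, Measurable f → (∃ C, ∀ x, |f x| ≤ C) →
      (P[fun ω => f (L ω)|mE.comap Y]) =ᵐ[P] fun ω => ∫ x, f x * p (Y ω, x) ∂(P.map L)) :
    P.map (fun ω => (Y ω, L ω)) =
      ((P.map Y).prod (P.map L)).withDensity (fun z => ENNReal.ofReal (p z)) := by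
  have : IsProbabilityMeasure (P.map Y) := Measure.isProbabilityMeasure_map hY.aemeasurable
  have : IsProbabilityMeasure (P.map L) := Measure.isProbabilityMeasure_map hL.aemeasurable
  have : IsProbabilityMeasure (P.map (fun ω => (Y ω, L ω))) :=
    Measure.isProbabilityMeasure_map (hY.prodMk hL).aemeasurable
  have hm : mE.comap Y ≤ m0 := hY.comap_le
  have hint : ∀ᵐ ω ∂P, Integrable (fun x => p (Y ω, x)) (P.map L) := by
    have h1 := h (fun _ => 1) measurable_const ⟨1, by simp⟩
    rw [condExp_const hm] at h1
    filter_upwards [h1] with ω hω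
    by_contra hc
    simp only [one_mul] at hω
    rw [integral_undef hc] at hω
    exact one_ne_zero hω
  have mp : Measurable fun z => ENNReal.ofReal (p z) := hp.ennreal_ofReal
  refine Measure.ext_prod fun {A C} hA hC => ?_
  rw [Measure.map_apply (hY.prodMk hL) (hA.prod hC), withDensity_apply _ (hA.prod hC),
    ← Measure.prod_restrict, lintegral_prod _ mp.aemeasurable,
    setLIntegral_map hA mp.lintegral_prod_right' hY]
  have mC : Measurable (C.indicator (fun _ => (1 : ℝ))) := measurable_const.indicator hC
  have hb : ∀ x, |C.indicator (fun _ => (1 : ℝ)) x| ≤ 1 := fun x => by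
    by_cases hx : x ∈ C <;> simp [hx]
  have hC' := h _ mC ⟨1, hb⟩
  have hfi : Integrable (fun ω => C.indicator (fun _ => (1 : ℝ)) (L ω)) P :=
    Integrable.of_bound (mC.comp hL).aestronglyMeasurable 1 (ae_of_all _ fun ω => hb _)
  have hA' : MeasurableSet[mE.comap Y] (Y ⁻¹' A) := ⟨A, hA, rfl⟩
  have hset := setIntegral_condExp hm hfi hA'
  have hnn : 0 ≤ᵐ[P] (P[fun ω => C.indicator (fun _ => (1 : ℝ)) (L ω)|mE.comap Y]) :=
    condExp_nonneg (ae_of_all _ fun ω => by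
      by_cases hx : L ω ∈ C <;> simp [hx])
  have e1 : ∫⁻ ω in Y ⁻¹' A, (∫⁻ l in C, ENNReal.ofReal (p (Y ω, l)) ∂(P.map L)) ∂P =
      ∫⁻ ω in Y ⁻¹' A, ENNReal.ofReal
        ((P[fun ω => C.indicator (fun _ => (1 : ℝ)) (L ω)|mE.comap Y]) ω) ∂P := by
    refine lintegral_congr_ae (ae_restrict_of_ae ?_)
    filter_upwards [hC', hint] with ω h1 h2
    rw [h1]
    have : (fun x => C.indicator (fun _ => (1 : ℝ)) x * p (Y ω, x)) =
        C.indicator (fun x => p (Y ω, x)) := by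
      ext x; by_cases hx : x ∈ C <;> simp [hx]
    rw [this, integral_indicator hC,
      ofReal_integral_eq_lintegral_ofReal h2.integrableOn (ae_of_all _ fun x => hp0 _)]
  rw [e1, ← ofReal_integral_eq_lintegral_ofReal integrable_condExp.integrableOn
    (ae_restrict_of_ae hnn), hset]
  have : (fun ω => C.indicator (fun _ => (1 : ℝ)) (L ω)) = (L ⁻¹' C).indicator 1 := by
    ext ω; by_cases hx : L ω ∈ C <;> simp [hx]
  rw [this, integral_indicator_one (hL hC), ofReal_measureReal,
    Measure.restrict_apply (hL hC), inter_comm]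
  rfl

theorem measurable_runInf' {Ω : Type*} [m0 : MeasurableSpace Ω] (X : ℝ≥0 → Ω → ℝ) (t : ℝ≥0)
    (hX : ∀ s ≤ t, Measurable (X s)) (hc : ∀ ω, Continuous fun s => X s ω) :
    Measurable (runInf X t) := by
  have hne : Nonempty (Set.Icc (0 : ℝ≥0) t) := ⟨⟨0, by simp⟩⟩
  refine measurable_of_Iio fun a => ?_
  have : runInf X t ⁻¹' Iio a =
      ⋃ n, {ω | X (TopologicalSpace.denseSeq (Set.Icc (0 : ℝ≥0) t) n).1 ω < a} := by
    ext ω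
    have hcω : Continuous fun s : Set.Icc (0 : ℝ≥0) t => X s.1 ω :=
      (hc ω).comp continuous_subtype_val
    have hbdd : BddBelow (range fun s : Set.Icc (0 : ℝ≥0) t => X s.1 ω) :=
      (isCompact_range hcω).bddBelow
    simp only [mem_preimage, mem_Iio, runInf, mem_iUnion, mem_ofPred_eq]
    rw [ciInf_lt_iff hbdd]
    constructor
    · rintro ⟨s, hs⟩
      obtain ⟨n, hn⟩ := (TopologicalSpace.denseRange_denseSeq
        (Set.Icc (0 : ℝ≥0) t)).exists_mem_open (isOpen_Iio.preimage hcω) ⟨s, hs⟩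
      exact ⟨n, hn⟩
    · rintro ⟨n, hn⟩
      exact ⟨_, hn⟩
  rw [this]
  exact MeasurableSet.iUnion fun n => measurableSet_lt (hX _ (TopologicalSpace.denseSeq (Set.Icc (0 : ℝ≥0) t) n).2.2) measurable_const

theorem insiderSigma_eq {Ω : Type*} [m0 : MeasurableSpace Ω] (F : Filtration ℝ≥0 m0)
    (L : Ω → ℝ) (ε : ℝ≥0 → Ω → ℝ) (t : ℝ≥0) :
    insiderSigma F L ε t =
      (F t ⊔ MeasurableSpace.comap (fun ω => L ω + ε t ω) inferInstance) ⊔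
      ⨆ s ∈ Set.Iic t, MeasurableSpace.comap (fun ω => ε s ω - ε t ω) inferInstance := by
  unfold insiderSigma
  apply le_antisymm
  · refine sup_le (le_sup_left.trans le_sup_left) (iSup₂_le fun s hs => ?_)
    set R := (F t ⊔ MeasurableSpace.comap (fun ω => L ω + ε t ω) inferInstance) ⊔
      ⨆ s ∈ Set.Iic t, MeasurableSpace.comap (fun ω => ε s ω - ε t ω) inferInstance with hR
    have a1 : Measurable[R] (fun ω => L ω + ε t ω) :=
      measurable_iff_comap_le.2 (le_sup_right.trans le_sup_left)
    have a2 : Measurable[R] (fun ω => ε s ω - ε t ω) :=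
      measurable_iff_comap_le.2 (le_trans (le_iSup₂ (f := fun s (_ : s ∈ Set.Iic t) =>
        MeasurableSpace.comap (fun ω => ε s ω - ε t ω) inferInstance) s hs) le_sup_right)
    have a3 : Measurable[R] (fun ω => L ω + ε s ω) := by
      convert a1.add a2 using 2 with ω
      simp only [Pi.add_apply]
      ring
    exact measurable_iff_comap_le.1 a3
  · set R := F t ⊔ ⨆ s ∈ Set.Iic t,
      MeasurableSpace.comap (fun ω => L ω + ε s ω) inferInstance with hR
    have a1 : ∀ s ∈ Set.Iic t, Measurable[R] (fun ω => L ω + ε s ω) := fun s hs =>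
      measurable_iff_comap_le.2 (le_trans (le_iSup₂ (f := fun s (_ : s ∈ Set.Iic t) =>
        MeasurableSpace.comap (fun ω => L ω + ε s ω) inferInstance) s hs) le_sup_right)
    refine sup_le (sup_le le_sup_left (measurable_iff_comap_le.1 (a1 t (mem_Iic.2 le_rfl))))
      (iSup₂_le fun s hs => ?_)
    have a3 : Measurable[R] (fun ω => ε s ω - ε t ω) := by
      convert (a1 s hs).sub (a1 t (mem_Iic.2 le_rfl)) using 2 with ω
      simp only [Pi.sub_apply]
      ring
    exact measurable_iff_comap_le.1 a3

/-- The σ-algebra of the backward increments of the noise. -/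
def noiseSigma {Ω : Type*} (ε : ℝ≥0 → Ω → ℝ) (t : ℝ≥0) : MeasurableSpace Ω :=
  ⨆ s ∈ Set.Iic t, MeasurableSpace.comap (fun ω => ε s ω - ε t ω) inferInstance

/-- **Consequence of Proposition 5.1: the insider's Azéma supermartingale.** Under Jacod's
density hypothesis and the noisy-barrier setup, `P`-a.s.,
`E_P[1_{τ > t} | F^I_t] = S^I_t(L_t)` where
`S^I_t(x) = (∫ 1_{X*_t > l} p_t(l) q_t(x − l) P^L(dl)) / (∫ p_t(l) q_t(x − l) P^L(dl))`,
the denominator at `x = L_t` being a.s. positive. -/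
theorem insider_azema_supermartingale
    {Ω : Type*} [m0 : MeasurableSpace Ω] {P : Measure Ω} [IsProbabilityMeasure P]
    (F : Filtration ℝ≥0 m0)
    (X : ℝ≥0 → Ω → ℝ) (hX_adapted : Adapted F X)
    (hX_cont : ∀ ω, Continuous fun s => X s ω)
    (L : Ω → ℝ) (hL : Measurable L)
    (hX0 : ∀ᵐ ω ∂P, L ω < X 0 ω)
    (τ : Ω → ℝ≥0)
    (hτ : ∀ (θ : ℝ≥0) (ω : Ω), θ < τ ω ↔ L ω < runInf X θ ω)
    -- Jacod's density hypothesis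
    (p : ℝ≥0 → ℝ → Ω → ℝ)
    (hp_nonneg : ∀ t x ω, 0 ≤ p t x ω)
    (hp_meas : ∀ t, Measurable[(F t).prod inferInstance] fun q : Ω × ℝ => p t q.2 q.1)
    (hp_pos : ∀ t, ∀ᵐ ω ∂P, 0 < p t (L ω) ω)
    (hp_density : ∀ (t : ℝ≥0) (f : ℝ → ℝ), Measurable f → (∃ C, ∀ x, |f x| ≤ C) →
      (P[fun ω => f (L ω)|F t]) =ᵐ[P] fun ω => ∫ x, f x * p t x ω ∂(P.map L))
    -- the noise process: continuous, independent of `F_∞ ∨ σ(L)`, with backwardly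
    -- independent increments, whose marginal laws admit Lebesgue densities `q_t`
    (ε : ℝ≥0 → Ω → ℝ) (hε_meas : ∀ s, Measurable (ε s))
    (hε_cont : ∀ ω, Continuous fun s => ε s ω)
    (hε_indep : Indep (⨆ s, MeasurableSpace.comap (ε s) inferInstance)
      ((⨆ s, F s) ⊔ MeasurableSpace.comap L inferInstance) P)
    (hε_back : ∀ t θ : ℝ≥0, t ≤ θ →
      Indep (⨆ s ∈ Set.Iic t, MeasurableSpace.comap (fun ω => ε s ω - ε t ω) inferInstance)
        (MeasurableSpace.comap (ε θ) inferInstance) P)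
    (q : ℝ≥0 → ℝ → ℝ) (hq_meas : ∀ s, Measurable (q s)) (hq_nonneg : ∀ s x, 0 ≤ q s x)
    (hq_density : ∀ s, P.map (ε s) = volume.withDensity fun x => ENNReal.ofReal (q s x))
    (t : ℝ≥0) :
    (∀ᵐ ω ∂P, 0 < ∫ l, p t l ω * q t (L ω + ε t ω - l) ∂(P.map L)) ∧
    (P[fun ω => if t < τ ω then (1 : ℝ) else 0|insiderSigma F L ε t]) =ᵐ[P]
      fun ω =>
        (∫ l, (if l < runInf X t ω then (1 : ℝ) else 0) * p t l ω * q t (L ω + ε t ω - l)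
          ∂(P.map L))
        / (∫ l, p t l ω * q t (L ω + ε t ω - l) ∂(P.map L)) := by
  have hFm : F t ≤ m0 := F.le t
  have hHdef : noiseSigma ε t = ⨆ s ∈ Set.Iic t,
    MeasurableSpace.comap (fun ω => ε s ω - ε t ω) inferInstance := rfl
  have hHε : (noiseSigma ε t) ≤ ⨆ s, MeasurableSpace.comap (ε s) inferInstance := by
    rw [hHdef]
    refine iSup₂_le fun s _ => ?_
    have b : ∀ s, Measurable[⨆ s, MeasurableSpace.comap (ε s) inferInstance] (ε s) := fun s =>
      measurable_iff_comap_le.2 (le_iSup (fun s => MeasurableSpace.comap (ε s) inferInstance) s)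
    exact measurable_iff_comap_le.1 ((b s).sub (b t))
  have hεm : (⨆ s, MeasurableSpace.comap (ε s) inferInstance) ≤ m0 :=
    iSup_le fun s => (hε_meas s).comap_le
  have hHm : (noiseSigma ε t) ≤ m0 := hHε.trans hεm
  have hYm : @Measurable Ω Ω m0 (F t) id := measurable_id'' hFm
  have hUm : @Measurable Ω Ω m0 (noiseSigma ε t) id := measurable_id'' hHm
  have hi' : @IndepFun Ω Ω ℝ m0 (noiseSigma ε t) _ id (ε t) P := by
    rw [@IndepFun_iff_Indep, MeasurableSpace.comap_id, hHdef]
    exact hε_back t t le_rfl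
  have hi : @IndepFun Ω (Ω × ℝ) (Ω × ℝ) m0 ((noiseSigma ε t).prod inferInstance) ((F t).prod inferInstance)
      (fun ω => (id ω, ε t ω)) (fun ω => (id ω, L ω)) P := by
    rw [@IndepFun_iff_Indep]
    have c1 := @MeasurableSpace.comap_prodMk Ω Ω ℝ (noiseSigma ε t) inferInstance id (ε t)
    have c2 := @MeasurableSpace.comap_prodMk Ω Ω ℝ (F t) inferInstance id L
    rw [MeasurableSpace.comap_id] at c1 c2
    erw [c1, c2]
    refine indep_of_indep_of_le_left (indep_of_indep_of_le_right hε_indep ?_) ?_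
    · exact sup_le_sup_right (le_iSup (fun s => (F s : MeasurableSpace Ω)) t) _
    · exact sup_le hHε (le_iSup (fun s => MeasurableSpace.comap (ε s) inferInstance) t)
  have h1 := @joint_law Ω Ω m0 (F t) P _ id hYm L hL (fun z => p t z.2 z.1) (hp_meas t)
    (fun z => hp_nonneg _ _ _) (by
      intro f hf hb
      rw [MeasurableSpace.comap_id]
      exact hp_density t f hf hb)
  have hr : @Measurable Ω ℝ (F t) _ (runInf X t) :=
    @measurable_runInf' Ω (F t) X t
      (fun s hs => (hX_adapted s).mono (F.mono hs) le_rfl) hX_cont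
  have hpe : @Measurable (Ω × ℝ) ℝ≥0∞ ((F t).prod inferInstance) _
      (fun z => ENNReal.ofReal (p t z.2 z.1)) :=
    ENNReal.measurable_ofReal.comp (hp_meas t)
  obtain ⟨k0, ktop, kc⟩ := @core Ω Ω Ω m0 (F t) (noiseSigma ε t) P _ id hYm L (ε t) hL (hε_meas t) id hUm
    (fun z => ENNReal.ofReal (p t z.2 z.1)) hpe
    (fun x => ENNReal.ofReal (q t x)) (hq_meas t).ennreal_ofReal h1 (hq_density t) hi hi'
    (runInf X t) hr
  simp only [id] at k0 ktop
  have hmp : ∀ ω, Measurable fun l => p t l ω := fun ω =>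
    (hp_meas t).comp (@measurable_prodMk_left Ω ℝ (F t) _ ω)
  have hmk : ∀ ω, Measurable fun l => p t l ω * q t (L ω + ε t ω - l) := fun ω =>
    (hmp ω).mul ((hq_meas t).comp (by fun_prop))
  have hDen : ∀ ω, ∫ l, p t l ω * q t (L ω + ε t ω - l) ∂(P.map L) =
      (∫⁻ l, ENNReal.ofReal (p t l ω) * ENNReal.ofReal (q t (L ω + ε t ω - l)) ∂(P.map L)).toReal := by
    intro ω
    rw [integral_eq_lintegral_of_nonneg_ae
      (ae_of_all _ fun l => mul_nonneg (hp_nonneg _ _ _) (hq_nonneg _ _))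
      (hmk ω).aestronglyMeasurable]
    simp only [ENNReal.ofReal_mul (hp_nonneg _ _ _)]
  have hNum : ∀ ω, ∫ l, (if l < runInf X t ω then (1 : ℝ) else 0) * p t l ω *
        q t (L ω + ε t ω - l) ∂(P.map L) =
      (∫⁻ l, ENNReal.ofReal (p t l ω) * ENNReal.ofReal (q t (L ω + ε t ω - l)) *
        (if l < runInf X t ω then 1 else 0) ∂(P.map L)).toReal := by
    intro ω
    have mi : Measurable fun l : ℝ => if l < runInf X t ω then (1 : ℝ) else 0 :=
      Measurable.ite measurableSet_Iio measurable_const measurable_const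
    rw [integral_eq_lintegral_of_nonneg_ae]
    · congr 1
      refine lintegral_congr fun l => ?_
      split_ifs <;> simp [ENNReal.ofReal_mul (hp_nonneg _ _ _)]
    · refine ae_of_all _ fun l => mul_nonneg (mul_nonneg ?_ (hp_nonneg _ _ _)) (hq_nonneg _ _)
      split_ifs <;> simp
    · exact ((mi.mul (hmp ω)).mul ((hq_meas t).comp (by fun_prop))).aestronglyMeasurable
  have hσ : insiderSigma F L ε t = @MeasurableSpace.comap Ω ((Ω × ℝ) × Ω)
      (fun ω => ((id ω, L ω + ε t ω), id ω))
      (@Prod.instMeasurableSpace _ _ (@Prod.instMeasurableSpace _ _ (F t) _) (noiseSigma ε t)) := by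
    rw [insiderSigma_eq, ← hHdef]
    have c1 := @MeasurableSpace.comap_prodMk Ω (Ω × ℝ) Ω
      (@Prod.instMeasurableSpace _ _ (F t) _) (noiseSigma ε t) (fun ω => (id ω, L ω + ε t ω)) id
    have c2 := @MeasurableSpace.comap_prodMk Ω Ω ℝ (F t) inferInstance id (fun ω => L ω + ε t ω)
    rw [MeasurableSpace.comap_id] at c1 c2
    exact (c1.trans (congrArg (· ⊔ noiseSigma ε t) c2)).symm
  refine ⟨?_, ?_⟩
  · filter_upwards [k0, ktop] with ω a b
    rw [hDen]
    exact ENNReal.toReal_pos a b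
  · rw [hσ]
    have hf : (fun ω => if t < τ ω then (1 : ℝ) else 0) =
        fun ω => if L ω < runInf X t (id ω) then (1 : ℝ) else 0 := by
      ext ω
      simp only [hτ t ω, id]
    rw [hf]
    refine kc.trans (ae_of_all _ fun ω => ?_)
    simp only [id]
    rw [hNum, hDen, ENNReal.toReal_div]
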